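/- Let c ≥ 1, t ≥ 1, let s₁,…,s_t ≥ 1 be pairwise distinct integers and η₁,…,η_t ≥ 1 integers with ∑ηᵢ ≥ 2. Then the degree-(t+1) polynomial q(X) = (X − c + 1) ∏_{i=1}^t (X − s_i + 1) − c ∑_{i=1}^t η_i s_i ∏_{j≠i} (X − s_j + 1) has t+1 distinct real roots, i.e., all its roots are real and simple. -/

import Mathlib

/-!
Put `P = ∏ᵢ (X - aᵢ)` with `aᵢ = sᵢ - 1` distinct, and `wᵢ = c ηᵢ sᵢ > 0`, `b = c - 1`. The polynomial
is `q = P · f` with the secular function `f(z) = z - b - ∑ᵢ wᵢ / (z - aᵢ)`, and `q(aᵢ) ≠ 0`, so the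
roots of `q` are exactly the zeros of `f`.

* Since `Im f(z) = Im z · (1 + ∑ᵢ wᵢ / |z - aᵢ|²)` for complex `z`, all zeros of `f` are real; hence
  `q` splits over `ℝ` (`secularPoly_splits`).
* Since `f'(x) = 1 + ∑ᵢ wᵢ / (x - aᵢ)² > 0` for real `x`, all zeros of `f` are simple
  (`secularPoly_roots_nodup`).

As `q` has degree `t + 1`, both claims follow.
-/

section Secular

open Polynomial

variable {ι : Type*} [Fintype ι] {K : Type*} [Field K]

/-- The secular function `z - b - ∑ᵢ wᵢ / (z - aᵢ)`, meaningful for `z` outside the range of `a`. -/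
noncomputable def secularFun (b : K) (a w : ι → K) (z : K) : K :=
  z - b - ∑ i, w i / (z - a i)

/-- For real data the secular function preserves the open upper and lower half-planes, so its
complex zeros are real. -/
lemma im_eq_zero_of_secularFun_eq_zero (b : ℝ) (a w : ι → ℝ) (hw : ∀ i, 0 < w i) {z : ℂ}
    (hz : secularFun (b : ℂ) (fun i ↦ (a i : ℂ)) (fun i ↦ (w i : ℂ)) z = 0) : z.im = 0 := by
  have h : z.im * (1 + ∑ i, w i / Complex.normSq (z - a i)) = 0 := by
    rw [← Complex.zero_im, ← hz, secularFun, mul_add, Finset.mul_sum, Complex.sub_im,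
      Complex.im_sum, Complex.sub_im, Complex.ofReal_im, sub_zero, mul_one, sub_eq_add_neg,
      ← Finset.sum_neg_distrib]
    congr 1
    refine Finset.sum_congr rfl fun i _ ↦ ?_
    rw [Complex.div_im]
    simp
    ring
  refine (mul_eq_zero.1 h).resolve_right (ne_of_gt ?_)
  have := Finset.sum_nonneg fun i (_ : i ∈ Finset.univ) ↦
    div_nonneg (hw i).le (Complex.normSq_nonneg (z - a i))
  linarith

lemma hasDerivAt_secularFun (b : ℝ) (a w : ι → ℝ) {x : ℝ} (hx : ∀ i, x ≠ a i) :
    HasDerivAt (secularFun b a w) (1 + ∑ i, w i / (x - a i) ^ 2) x := by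
  have h (i : ι) : HasDerivAt (fun y ↦ w i / (y - a i)) (-(w i / (x - a i) ^ 2)) x := by
    have := (hasDerivAt_const x (w i)).div ((hasDerivAt_id x).sub_const (a i))
      (sub_ne_zero.2 (hx i))
    exact this.congr_deriv (by simp [neg_div])
  have := ((hasDerivAt_id x).sub_const b).sub
    (HasDerivAt.fun_sum fun i (_ : i ∈ Finset.univ) ↦ h i)
  exact this.congr_deriv (by simp)

variable [DecidableEq ι]

/-- The polynomial `(X - b) ∏ᵢ (X - aᵢ) - ∑ᵢ wᵢ ∏_{j ≠ i} (X - aⱼ)`, that is, the secular function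
`z - b - ∑ᵢ wᵢ / (z - aᵢ)` cleared of denominators. -/
noncomputable def secularPoly (b : K) (a w : ι → K) : K[X] :=
  (X - C b) * ∏ i, (X - C (a i)) - ∑ i, C (w i) * ∏ j ∈ Finset.univ.erase i, (X - C (a j))

lemma secularPoly_eval (b : K) (a w : ι → K) (z : K) :
    (secularPoly b a w).eval z =
      (z - b) * ∏ i, (z - a i) - ∑ i, w i * ∏ j ∈ Finset.univ.erase i, (z - a j) := by
  simp [secularPoly, eval_prod, eval_finsetSum]

lemma secularPoly_eval_eq_mul (b : K) (a w : ι → K) {z : K} (hz : ∀ i, z ≠ a i) :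
    (secularPoly b a w).eval z = (∏ i, (z - a i)) * secularFun b a w z := by
  rw [secularPoly_eval, secularFun, mul_sub, Finset.mul_sum, mul_comm (z - b)]
  congr 1
  refine Finset.sum_congr rfl fun i _ ↦ ?_
  have h : z - a i ≠ 0 := sub_ne_zero.2 (hz i)
  rw [← Finset.mul_prod_erase Finset.univ (fun j ↦ z - a j) (Finset.mem_univ i)]
  field_simp

/-- At a node `aₖ` only the `k`-th summand survives, and it is nonzero. -/
lemma secularPoly_eval_node_ne_zero (b : K) {a w : ι → K} (ha : Function.Injective a)
    (hw : ∀ i, w i ≠ 0) (k : ι) : (secularPoly b a w).eval (a k) ≠ 0 := by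
  rw [secularPoly_eval, Finset.prod_eq_zero (Finset.mem_univ k) (sub_self _), mul_zero, zero_sub,
    neg_ne_zero, Finset.sum_eq_single k]
  · refine mul_ne_zero (hw k) (Finset.prod_ne_zero_iff.2 fun j hj ↦ sub_ne_zero.2 fun h ↦ ?_)
    exact Finset.ne_of_mem_erase hj (ha h).symm
  · intro i _ hik
    rw [Finset.prod_eq_zero (i := k) (by simp [hik.symm]) (sub_self _), mul_zero]
  · simp

lemma secularFun_eq_zero_of_isRoot {b : K} {a w : ι → K} (ha : Function.Injective a)
    (hw : ∀ i, w i ≠ 0) {z : K} (hz : (secularPoly b a w).eval z = 0) :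
    (∀ i, z ≠ a i) ∧ secularFun b a w z = 0 := by
  have hza : ∀ i, z ≠ a i := by
    rintro i rfl
    exact secularPoly_eval_node_ne_zero b ha hw i hz
  rw [secularPoly_eval_eq_mul b a w hza] at hz
  exact ⟨hza, (mul_eq_zero.1 hz).resolve_left
    (Finset.prod_ne_zero_iff.2 fun i _ ↦ sub_ne_zero.2 (hza i))⟩

lemma secularPoly_natDegree (b : K) (a w : ι → K) :
    (secularPoly b a w).natDegree = Fintype.card ι + 1 := by
  have h1 : ((X - C b) * ∏ i, (X - C (a i))).natDegree = Fintype.card ι + 1 := by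
    rw [(monic_X_sub_C b).natDegree_mul (monic_prod_X_sub_C a Finset.univ),
      natDegree_X_sub_C, natDegree_finsetProd_X_sub_C_eq_card, Finset.card_univ, add_comm]
  have h2 : (∑ i, C (w i) * ∏ j ∈ Finset.univ.erase i, (X - C (a j))).natDegree ≤
      Fintype.card ι := by
    refine natDegree_sum_le_of_forall_le _ _ fun i _ ↦ (natDegree_C_mul_le _ _).trans ?_
    rw [natDegree_finsetProd_X_sub_C_eq_card]
    exact Finset.card_le_univ _
  rw [secularPoly, natDegree_sub_eq_left_of_natDegree_lt (by omega), h1]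

lemma secularPoly_map {L : Type*} [Field L] (φ : K →+* L) (b : K) (a w : ι → K) :
    (secularPoly b a w).map φ = secularPoly (φ b) (φ ∘ a) (φ ∘ w) := by
  simp [secularPoly, Polynomial.map_prod, Polynomial.map_sum]

lemma secularPoly_splits (b : ℝ) {a w : ι → ℝ} (ha : Function.Injective a) (hw : ∀ i, 0 < w i) :
    (secularPoly b a w).Splits := by
  refine Splits.of_splits_map Complex.ofRealHom (IsAlgClosed.splits _) fun z hz ↦ ?_
  have hroot := isRoot_of_mem_roots hz
  rw [secularPoly_map] at hroot
  obtain ⟨-, hf⟩ := secularFun_eq_zero_of_isRoot (Complex.ofReal_injective.comp ha)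
    (fun i ↦ Complex.ofReal_ne_zero.2 (hw i).ne') hroot
  exact ⟨z.re, Complex.ext rfl (im_eq_zero_of_secularFun_eq_zero b a w hw hf).symm⟩

lemma secularPoly_roots_nodup (b : ℝ) {a w : ι → ℝ} (ha : Function.Injective a)
    (hw : ∀ i, 0 < w i) : (secularPoly b a w).roots.Nodup := by
  have hq : secularPoly b a w ≠ 0 := fun h ↦ by
    simpa [h] using secularPoly_natDegree b a w
  rw [Multiset.nodup_iff_count_le_one]
  intro x
  rw [count_roots]
  by_contra! hmult
  obtain ⟨h0, h1⟩ := (one_lt_rootMultiplicity_iff_isRoot hq).1 hmult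
  obtain ⟨hxa, hf⟩ := secularFun_eq_zero_of_isRoot ha (fun i ↦ (hw i).ne') h0
  -- Differentiating `q = P f` at a zero of `f` gives `q'(x) = P(x) f'(x)`.
  have hP := (∏ i, (X - C (a i))).hasDerivAt x
  have hPf := hP.mul (hasDerivAt_secularFun b a w hxa)
  have hev : (fun y ↦ (secularPoly b a w).eval y) =ᶠ[nhds x]
      (fun y ↦ (∏ i, (X - C (a i))).eval y) * secularFun b a w := by
    filter_upwards [Filter.eventually_all.2 fun i ↦ eventually_ne_nhds (hxa i)] with y hy
    rw [secularPoly_eval_eq_mul b a w hy, Pi.mul_apply, eval_prod]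
    simp
  have hder := ((secularPoly b a w).hasDerivAt x).unique (hPf.congr_of_eventuallyEq hev)
  rw [h1.eq_zero, hf, mul_zero, zero_add, eval_prod] at hder
  have hpos : 0 < 1 + ∑ i, w i / (x - a i) ^ 2 := by
    have := Finset.sum_nonneg fun i (_ : i ∈ Finset.univ) ↦
      div_nonneg (hw i).le (sq_nonneg (x - a i))
    linarith
  refine mul_ne_zero (Finset.prod_ne_zero_iff.2 fun i _ ↦ ?_) hpos.ne' hder.symm
  simpa using sub_ne_zero.2 (hxa i)

end Secular


open Polynomial in
/-- Let `c ≥ 1`, `t ≥ 1`, let `s₁,…,s_t ≥ 1` be pairwise distinct integers and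
`η₁,…,η_t ≥ 1` integers with `∑ ηᵢ ≥ 2`. Then the degree-`(t+1)` real polynomial
`q(X) = (X-c+1) ∏ᵢ (X-sᵢ+1) - c ∑ᵢ ηᵢsᵢ ∏_{j≠i} (X-sⱼ+1)` has `t+1` distinct real
roots, i.e. all of its roots are real and simple. -/
theorem gcs_poly_roots_real_simple (c t : ℕ) (s η : Fin t → ℕ)
    (hc : 1 ≤ c) (ht : 1 ≤ t) (hs : ∀ i, 1 ≤ s i) (hη : ∀ i, 1 ≤ η i)
    (hdist : Function.Injective s) (hsum : 2 ≤ ∑ i, η i) :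
    (((X - C ((c : ℝ) - 1)) * ∏ i, (X - C ((s i : ℝ) - 1)) -
        C (c : ℝ) * ∑ i, C ((η i : ℝ) * (s i : ℝ)) *
          ∏ j ∈ Finset.univ.erase i, (X - C ((s j : ℝ) - 1))).roots.card = t + 1) ∧
    ((X - C ((c : ℝ) - 1)) * ∏ i, (X - C ((s i : ℝ) - 1)) -
        C (c : ℝ) * ∑ i, C ((η i : ℝ) * (s i : ℝ)) *
          ∏ j ∈ Finset.univ.erase i, (X - C ((s j : ℝ) - 1))).roots.Nodup := by
  have hq : (X - C ((c : ℝ) - 1)) * ∏ i, (X - C ((s i : ℝ) - 1)) -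
      C (c : ℝ) * ∑ i, C ((η i : ℝ) * (s i : ℝ)) *
        ∏ j ∈ Finset.univ.erase i, (X - C ((s j : ℝ) - 1)) =
      secularPoly ((c : ℝ) - 1) (fun i ↦ (s i : ℝ) - 1) (fun i ↦ c * ((η i : ℝ) * s i)) := by
    simp only [secularPoly, Finset.mul_sum, C_mul, mul_assoc]
  have ha : Function.Injective fun i ↦ (s i : ℝ) - 1 := fun i j h ↦
    hdist (Nat.cast_injective (sub_left_injective h))
  have hw (i : Fin t) : 0 < (c : ℝ) * ((η i : ℝ) * s i) := by
    have := hs i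
    have := hη i
    positivity
  rw [hq]
  refine ⟨?_, secularPoly_roots_nodup _ ha hw⟩
  rw [← (secularPoly_splits _ ha hw).natDegree_eq_card_roots, secularPoly_natDegree,
    Fintype.card_fin]
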